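/- arXiv:2011.14609 — 2 statements merged into one kernel-verified Lean document; each statement's English description precedes it below -/
import Mathlib

section
/- Let m and n be positive integers with n ≥ 4 even, let 0 ≤ ℓ ≤ n−1 be an integer of the same parity as m, and let G = ⟨t, x, y | t² = 1, x^{n/2} = 1, y^m = x^{(ℓ+m)/2}, txt = x⁻¹, tyt = y⁻¹, xy = yx⟩. Then there exists an automorphism of G fixing t and interchanging tx with ty if and only if gcd(n, ℓ+m) = 2m and 2mn divides ℓ² + 2mℓ − 3m². -/
namespace HTGPaper

/-- The honeycomb toroidal graph `HTG(m,n,ℓ)`. -/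
def HTG (m n ℓ : ℕ) : SimpleGraph (ZMod m × ZMod n) :=
  SimpleGraph.fromRel (fun v w =>
    (v.1 = w.1 ∧ (w.2 = v.2 + 1 ∨ w.2 = v.2 - 1)) ∨
    (v.1.val ≠ m - 1 ∧ w.1 = v.1 + 1 ∧ w.2 = v.2 ∧ v.1.val % 2 ≠ v.2.val % 2) ∨
    (v.1.val = m - 1 ∧ w.1 = 0 ∧ w.2 = v.2 + (ℓ : ZMod n) ∧ v.2.val % 2 = m % 2))

/-- Generators of the generalized dihedral group `G`. -/
inductive Gen | t | x | y

/-- Relators of the presentation of `G`. -/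
def rels (m n ℓ : ℕ) : Set (FreeGroup Gen) :=
  {FreeGroup.of Gen.t ^ 2,
   FreeGroup.of Gen.x ^ (n / 2),
   FreeGroup.of Gen.y ^ m * (FreeGroup.of Gen.x ^ ((ℓ + m) / 2))⁻¹,
   FreeGroup.of Gen.t * FreeGroup.of Gen.x * (FreeGroup.of Gen.t)⁻¹ * FreeGroup.of Gen.x,
   FreeGroup.of Gen.t * FreeGroup.of Gen.y * (FreeGroup.of Gen.t)⁻¹ * FreeGroup.of Gen.y,
   FreeGroup.of Gen.x * FreeGroup.of Gen.y * (FreeGroup.of Gen.x)⁻¹ * (FreeGroup.of Gen.y)⁻¹}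

/-- The group `G = ⟨t,x,y | t², x^{n/2}, y^m x^{-(ℓ+m)/2}, txt⁻¹x, tyt⁻¹y, [x,y]⟩`. -/
abbrev G (m n ℓ : ℕ) : Type := PresentedGroup (rels m n ℓ)

def gent (m n ℓ : ℕ) : G m n ℓ := PresentedGroup.of Gen.t
def genx (m n ℓ : ℕ) : G m n ℓ := PresentedGroup.of Gen.x
def geny (m n ℓ : ℕ) : G m n ℓ := PresentedGroup.of Gen.y

/-- The connection set `{t, tx, ty}`. -/
def S (m n ℓ : ℕ) : Set (G m n ℓ) :=
  {gent m n ℓ, gent m n ℓ * genx m n ℓ, gent m n ℓ * geny m n ℓ}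

/-- The Cayley graph of a group with respect to a subset. -/
def cayley (H : Type*) [Group H] (T : Set H) : SimpleGraph H :=
  SimpleGraph.fromRel (fun g h => ∃ s ∈ T, h = g * s)

/-- The Cayley graph of an additive group with respect to a subset. -/
def addCayley (H : Type*) [AddGroup H] (T : Set H) : SimpleGraph H :=
  SimpleGraph.fromRel (fun g h => ∃ s ∈ T, h = g + s)

/-- `Cay(H;T)` is a normal Cayley graph of `H` if the left regular representation `H_L`
is a normal subgroup of the automorphism group, i.e. every conjugate of a left
translation by a graph automorphism is again a left translation. -/
def IsNormalCayley (H : Type*) [Group H] (T : Set H) : Prop :=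
  ∀ (f : cayley H T ≃g cayley H T) (a : H), ∃ b : H,
    ∀ g : H, f (a * f.symm g) = b * g

/-- An `s`-arc of a graph: `s+1` vertices, consecutive ones adjacent, and any three
consecutive vertices pairwise distinct. -/
def IsSArc {V : Type*} (Γ : SimpleGraph V) (s : ℕ) (p : Fin (s + 1) → V) : Prop :=
  (∀ i : Fin s, Γ.Adj (p i.castSucc) (p i.succ)) ∧
  ∀ i j : Fin (s + 1), (i : ℕ) + 2 = (j : ℕ) → p i ≠ p j

/-- A graph is `s`-arc-transitive if its automorphism group is transitive on `s`-arcs. -/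
def IsSArcTransitive {V : Type*} (Γ : SimpleGraph V) (s : ℕ) : Prop :=
  ∀ p q : Fin (s + 1) → V, IsSArc Γ s p → IsSArc Γ s q →
    ∃ f : Γ ≃g Γ, ∀ i, f (p i) = q i

/-- A graph is `s`-arc-regular if its automorphism group is regular on `s`-arcs. -/
def IsSArcRegular {V : Type*} (Γ : SimpleGraph V) (s : ℕ) : Prop :=
  ∀ p q : Fin (s + 1) → V, IsSArc Γ s p → IsSArc Γ s q →
    ∃! f : Γ ≃g Γ, ∀ i, f (p i) = q i

/-- A graph is arc-transitive if it is `1`-arc-transitive. -/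
def IsArcTransitive {V : Type*} (Γ : SimpleGraph V) : Prop :=
  IsSArcTransitive Γ 1

/-- The generalized prism `GPr(k)`. -/
def GPr (k : ℕ) : SimpleGraph (ZMod 2 × ZMod (2 * k)) :=
  SimpleGraph.fromRel (fun v w =>
    (v.1 = w.1 ∧ (w.2 = v.2 + 1 ∨ w.2 = v.2 - 1)) ∨
    (Even v.2.val ∧ w.1 = v.1 + 1 ∧ w.2 = v.2 + 1))

/-- The cubic graph on `k` vertices given by LCF-type data `f`. -/
def lcfGraph (k : ℕ) (f : ℕ → ℤ) : SimpleGraph (ZMod k) :=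
  SimpleGraph.fromRel (fun v w => w = v + 1 ∨ w = v + (f v.val : ZMod k))

/-- The cube graph `Q₃`, LCF notation `[3,-3]⁴`. -/
def cubeGraph : SimpleGraph (ZMod 8) :=
  lcfGraph 8 (fun i => if i % 2 = 0 then 3 else -3)

/-- The Heawood graph, LCF notation `[5,-5]⁷`. -/
def heawood : SimpleGraph (ZMod 14) :=
  lcfGraph 14 (fun i => if i % 2 = 0 then 5 else -5)

/-- The Möbius–Kantor graph, LCF notation `[5,-5]⁸`. -/
def mobiusKantor : SimpleGraph (ZMod 16) :=
  lcfGraph 16 (fun i => if i % 2 = 0 then 5 else -5)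

/-- The Pappus graph, LCF notation `[5,7,-7,7,-7,-5]³`. -/
def pappus : SimpleGraph (ZMod 18) :=
  lcfGraph 18 (fun i =>
    match i % 6 with
    | 0 => 5 | 1 => 7 | 2 => -7 | 3 => 7 | 4 => -7 | _ => -5)

/-- The red edges of `HTG(m,n,ℓ) = Cay(G;{t,tx,ty})`. -/
def Red (m n ℓ : ℕ) : Set (Sym2 (G m n ℓ)) :=
  {e | ∃ g : G m n ℓ, e = s(g, g * gent m n ℓ)}

/-- The blue edges. -/
def Blue (m n ℓ : ℕ) : Set (Sym2 (G m n ℓ)) :=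
  {e | ∃ g : G m n ℓ, e = s(g, g * (gent m n ℓ * genx m n ℓ))}

/-- The green edges. -/
def Green (m n ℓ : ℕ) : Set (Sym2 (G m n ℓ)) :=
  {e | ∃ g : G m n ℓ, e = s(g, g * (gent m n ℓ * geny m n ℓ))}

/-- The three color classes. -/
def colorClasses (m n ℓ : ℕ) : Set (Set (Sym2 (G m n ℓ))) :=
  {Red m n ℓ, Blue m n ℓ, Green m n ℓ}

/-- An automorphism of `Cay(G;{t,tx,ty})` is color permuting if it preserves the
partition of the edges into the three color classes. -/
def IsColorPermuting {m n ℓ : ℕ}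
    (f : cayley (G m n ℓ) (S m n ℓ) ≃g cayley (G m n ℓ) (S m n ℓ)) : Prop :=
  ∀ C ∈ colorClasses m n ℓ, Sym2.map ⇑f '' C ∈ colorClasses m n ℓ

/-- The group `Aut(H;T)` of automorphisms of `H` fixing `T` setwise. -/
def autFixing (H : Type*) [Group H] (T : Set H) : Subgroup (MulAut H) where
  carrier := {φ | ⇑φ '' T = T}
  one_mem' := by
    show ⇑(1 : MulAut H) '' T = T
    simp
  mul_mem' := by
    intro a b ha hb
    show ⇑(a * b) '' T = T
    have h : ⇑(a * b) = ⇑a ∘ ⇑b := rfl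
    rw [h, Set.image_comp]
    rw [show ⇑b '' T = T from hb, show ⇑a '' T = T from ha]
  inv_mem' := by
    intro a ha
    show ⇑a⁻¹ '' T = T
    conv_lhs => rw [← show ⇑a '' T = T from ha]
    rw [← Set.image_comp]
    have h : ⇑a⁻¹ ∘ ⇑a = id := by
      funext g
      simp
    rw [h, Set.image_id]


/-- The lattice of exponents `(a,b)` with `x^a y^b = 1`. -/
def latt (m N k : ℤ) : AddSubgroup (ℤ × ℤ) where
  carrier := {p | ∃ u v : ℤ, p.1 = N * u - k * v ∧ p.2 = m * v}
  zero_mem' := ⟨0, 0, by simp, by simp⟩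
  add_mem' := by
    rintro a b ⟨u, v, h1, h2⟩ ⟨u', v', h3, h4⟩
    exact ⟨u + u', v + v', by simp [h1, h3]; ring, by simp [h2, h4]; ring⟩
  neg_mem' := by
    rintro a ⟨u, v, h1, h2⟩
    exact ⟨-u, -v, by simp [h1]; ring, by simp [h2]⟩

/-- Permutation representation on generators. -/
def repGen (m N k : ℤ) : Gen → Equiv.Perm ((ℤ × ℤ) ⧸ latt m N k)
  | Gen.t => Equiv.neg _
  | Gen.x => Equiv.addRight (QuotientAddGroup.mk' (latt m N k) (1, 0))
  | Gen.y => Equiv.addRight (QuotientAddGroup.mk' (latt m N k) (0, 1))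

theorem addRight_pow {A : Type*} [AddCommGroup A] (a : A) (j : ℕ) :
    (Equiv.addRight a : Equiv.Perm A) ^ j = Equiv.addRight (j • a) := by
  induction j with
  | zero => ext z; simp
  | succ j ih =>
    rw [pow_succ, ih]
    ext z
    simp [succ_nsmul]
    abel

theorem rep_rels (m n ℓ : ℕ) :
    ∀ r ∈ rels m n ℓ, FreeGroup.lift (repGen m (n / 2 : ℕ) ((ℓ + m) / 2 : ℕ)) r = 1 := by
  intro r hr
  simp only [rels, Set.mem_insert_iff, Set.mem_singleton_iff] at hr
  rcases hr with rfl | rfl | rfl | rfl | rfl | rfl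
  · ext z; simp [repGen, pow_two]
  · simp only [map_pow, FreeGroup.lift_apply_of, repGen, addRight_pow, ← map_nsmul]
    have : QuotientAddGroup.mk' (latt m (n / 2 : ℕ) ((ℓ + m) / 2 : ℕ))
        ((n / 2) • ((1, 0) : ℤ × ℤ)) = 0 := by
      rw [QuotientAddGroup.mk'_apply, QuotientAddGroup.eq_zero_iff]
      exact ⟨1, 0, by simp, by simp⟩
    rw [this]; ext z; simp
  · simp only [map_mul, map_inv, map_pow, FreeGroup.lift_apply_of, repGen, addRight_pow,
      ← map_nsmul]
    rw [mul_inv_eq_one]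
    congr 1
    rw [← sub_eq_zero, ← map_sub, QuotientAddGroup.mk'_apply, QuotientAddGroup.eq_zero_iff]
    exact ⟨0, 1, by simp, by simp⟩
  · simp only [map_mul, map_inv, FreeGroup.lift_apply_of, repGen]
    ext z
    simp only [Equiv.Perm.mul_apply, Equiv.neg_apply, Equiv.Perm.inv_def, Equiv.neg_symm, Equiv.coe_addRight, Equiv.Perm.coe_one, id_eq]
    abel
  · simp only [map_mul, map_inv, FreeGroup.lift_apply_of, repGen]
    ext z
    simp only [Equiv.Perm.mul_apply, Equiv.neg_apply, Equiv.Perm.inv_def, Equiv.neg_symm, Equiv.coe_addRight, Equiv.Perm.coe_one, id_eq]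
    abel
  · simp only [map_mul, map_inv, FreeGroup.lift_apply_of, repGen]
    rw [mul_inv_eq_one, mul_inv_eq_iff_eq_mul]
    ext z
    simp only [Equiv.Perm.mul_apply, Equiv.coe_addRight]
    abel

/-- The permutation representation. -/
def rep (m n ℓ : ℕ) : G m n ℓ →*
    Equiv.Perm ((ℤ × ℤ) ⧸ latt m (n / 2 : ℕ) ((ℓ + m) / 2 : ℕ)) :=
  PresentedGroup.toGroup (rep_rels m n ℓ)

theorem pow_eq_pow (m n ℓ i j : ℕ) (h : genx m n ℓ ^ i = geny m n ℓ ^ j) :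
    ∃ u v : ℤ, (i : ℤ) = (n / 2 : ℕ) * u - ((ℓ + m) / 2 : ℕ) * v ∧ -(j : ℤ) = m * v := by
  have hx : rep m n ℓ (genx m n ℓ) = repGen m (n / 2 : ℕ) ((ℓ + m) / 2 : ℕ) Gen.x :=
    PresentedGroup.toGroup.of _
  have hy : rep m n ℓ (geny m n ℓ) = repGen m (n / 2 : ℕ) ((ℓ + m) / 2 : ℕ) Gen.y :=
    PresentedGroup.toGroup.of _
  have h2 := congrArg (rep m n ℓ) h
  rw [map_pow, map_pow, hx, hy] at h2
  simp only [repGen, addRight_pow, ← map_nsmul] at h2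
  have h3 := DFunLike.congr_fun h2 0
  simp only [Equiv.coe_addRight, zero_add] at h3
  rw [← sub_eq_zero, ← map_sub, QuotientAddGroup.mk'_apply, QuotientAddGroup.eq_zero_iff] at h3
  obtain ⟨u, v, h4, h5⟩ := h3
  exact ⟨u, v, by simpa using h4, by simpa using h5⟩

theorem rel_one {m n ℓ : ℕ} {r : FreeGroup Gen} (h : r ∈ rels m n ℓ) :
    PresentedGroup.mk (rels m n ℓ) r = 1 :=
  PresentedGroup.one_of_mem h

theorem g_tt (m n ℓ : ℕ) : gent m n ℓ ^ 2 = 1 :=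
  rel_one (r := FreeGroup.of Gen.t ^ 2) (by simp [rels])

theorem g_x (m n ℓ : ℕ) : genx m n ℓ ^ (n / 2) = 1 :=
  rel_one (r := FreeGroup.of Gen.x ^ (n / 2)) (by simp [rels])

theorem g_yx (m n ℓ : ℕ) : geny m n ℓ ^ m = genx m n ℓ ^ ((ℓ + m) / 2) :=
  mul_inv_eq_one.1 (rel_one (r := FreeGroup.of Gen.y ^ m *
    (FreeGroup.of Gen.x ^ ((ℓ + m) / 2))⁻¹) (by simp [rels]))

theorem g_tx (m n ℓ : ℕ) : gent m n ℓ * genx m n ℓ * (gent m n ℓ)⁻¹ * genx m n ℓ = 1 :=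
  rel_one (r := FreeGroup.of Gen.t * FreeGroup.of Gen.x * (FreeGroup.of Gen.t)⁻¹ *
    FreeGroup.of Gen.x) (by simp [rels])

theorem g_ty (m n ℓ : ℕ) : gent m n ℓ * geny m n ℓ * (gent m n ℓ)⁻¹ * geny m n ℓ = 1 :=
  rel_one (r := FreeGroup.of Gen.t * FreeGroup.of Gen.y * (FreeGroup.of Gen.t)⁻¹ *
    FreeGroup.of Gen.y) (by simp [rels])

theorem g_xy (m n ℓ : ℕ) :
    genx m n ℓ * geny m n ℓ * (genx m n ℓ)⁻¹ * (geny m n ℓ)⁻¹ = 1 :=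
  rel_one (r := FreeGroup.of Gen.x * FreeGroup.of Gen.y * (FreeGroup.of Gen.x)⁻¹ *
    (FreeGroup.of Gen.y)⁻¹) (by simp [rels])

/-- The swap on generators. -/
def swapGen (m n ℓ : ℕ) : Gen → G m n ℓ
  | Gen.t => gent m n ℓ
  | Gen.x => geny m n ℓ
  | Gen.y => genx m n ℓ

theorem swap_rels (m n ℓ : ℕ) (h1 : geny m n ℓ ^ (n / 2) = 1)
    (h2 : genx m n ℓ ^ m = geny m n ℓ ^ ((ℓ + m) / 2)) :
    ∀ r ∈ rels m n ℓ, FreeGroup.lift (swapGen m n ℓ) r = 1 := by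
  intro r hr
  simp only [rels, Set.mem_insert_iff, Set.mem_singleton_iff] at hr
  rcases hr with rfl | rfl | rfl | rfl | rfl | rfl <;>
    simp only [map_mul, map_inv, map_pow, FreeGroup.lift_apply_of, swapGen]
  · exact g_tt m n ℓ
  · exact h1
  · rw [h2, mul_inv_cancel]
  · exact g_ty m n ℓ
  · exact g_tx m n ℓ
  · have h := g_xy m n ℓ
    rw [mul_inv_eq_one, mul_inv_eq_iff_eq_mul] at h ⊢
    exact h.symm

theorem exists_aut_iff (m n ℓ : ℕ) :
    (∃ φ : MulAut (G m n ℓ),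
        φ (gent m n ℓ) = gent m n ℓ ∧
        φ (gent m n ℓ * genx m n ℓ) = gent m n ℓ * geny m n ℓ ∧
        φ (gent m n ℓ * geny m n ℓ) = gent m n ℓ * genx m n ℓ) ↔
    (geny m n ℓ ^ (n / 2) = 1 ∧ genx m n ℓ ^ m = geny m n ℓ ^ ((ℓ + m) / 2)) := by
  constructor
  · rintro ⟨φ, ht, hx, hy⟩
    rw [map_mul, ht, mul_right_inj] at hx hy
    constructor
    · rw [← hx, ← map_pow, g_x, map_one]
    · have := congrArg φ (g_yx m n ℓ)
      rwa [map_pow, map_pow, hx, hy] at this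
  · rintro ⟨h1, h2⟩
    let f : G m n ℓ →* G m n ℓ := PresentedGroup.toGroup (swap_rels m n ℓ h1 h2)
    have ft : f (gent m n ℓ) = gent m n ℓ := PresentedGroup.toGroup.of _
    have fx : f (genx m n ℓ) = geny m n ℓ := PresentedGroup.toGroup.of _
    have fy : f (geny m n ℓ) = genx m n ℓ := PresentedGroup.toGroup.of _
    have ff : f.comp f = MonoidHom.id _ := by
      apply PresentedGroup.ext
      rintro (_ | _ | _)
      · exact (congrArg f ft).trans ft
      · exact (congrArg f fx).trans fy
      · exact (congrArg f fy).trans fx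
    refine ⟨MonoidHom.toMulEquiv f f ff ff, ?_, ?_, ?_⟩
    · exact ft
    · exact (map_mul f _ _).trans (congrArg₂ (· * ·) ft fx)
    · exact (map_mul f _ _).trans (congrArg₂ (· * ·) ft fy)

theorem arith1 (m N k : ℕ) (hm : 0 < m) (hN : 0 < N) :
    (((m : ℤ) ∣ N ∧ (m : ℤ) ∣ k) ∧ (m * N : ℤ) ∣ (k : ℤ) ^ 2 - m ^ 2) ↔
    (Nat.gcd N k = m ∧ (m * N : ℤ) ∣ (k : ℤ) ^ 2 - m ^ 2) := by
  refine and_congr_left fun h => ⟨?_, ?_⟩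
  · rintro ⟨h1, h2⟩
    obtain ⟨N', rfl⟩ := Int.natCast_dvd_natCast.1 h1
    obtain ⟨k', rfl⟩ := Int.natCast_dvd_natCast.1 h2
    rw [Nat.gcd_mul_left]
    have hc : Nat.gcd N' k' = 1 := by
      have hm' : (m : ℤ) ^ 2 ≠ 0 := by positivity
      have h3 : (N' : ℤ) ∣ (k' : ℤ) ^ 2 - 1 := by
        apply Int.dvd_of_mul_dvd_mul_left hm'
        convert h using 1 <;> push_cast <;> ring
      have h4 : ((Nat.gcd N' k' : ℕ) : ℤ) ∣ 1 := by
        have a : ((Nat.gcd N' k' : ℕ) : ℤ) ∣ N' := by exact_mod_cast Nat.gcd_dvd_left _ _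
        have b : ((Nat.gcd N' k' : ℕ) : ℤ) ∣ k' := by exact_mod_cast Nat.gcd_dvd_right _ _
        have c := dvd_sub (dvd_pow b two_ne_zero) (a.trans h3)
        simpa using c
      exact Nat.dvd_one.1 (by exact_mod_cast h4)
    rw [hc, mul_one]
  · rintro rfl
    exact ⟨by exact_mod_cast Nat.gcd_dvd_left _ _, by exact_mod_cast Nat.gcd_dvd_right _ _⟩

theorem lattice_iff (m n ℓ : ℕ) (hm : 0 < m) (hN : 0 < n / 2) :
    (geny m n ℓ ^ (n / 2) = 1 ∧ genx m n ℓ ^ m = geny m n ℓ ^ ((ℓ + m) / 2)) ↔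
    (((m : ℤ) ∣ (n / 2 : ℕ) ∧ (m : ℤ) ∣ ((ℓ + m) / 2 : ℕ)) ∧
      (m * (n / 2 : ℕ) : ℤ) ∣ (((ℓ + m) / 2 : ℕ) : ℤ) ^ 2 - m ^ 2) := by
  have hgx := g_x m n ℓ
  have hgyx := g_yx m n ℓ
  have key := pow_eq_pow m n ℓ
  generalize n / 2 = N at *
  generalize (ℓ + m) / 2 = k at *
  constructor
  · rintro ⟨h1, h2⟩
    obtain ⟨u, v, h3, h4⟩ := key 0 N (by rw [h1, pow_zero])
    obtain ⟨u', v', h5, h6⟩ := key m k h2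
    refine ⟨⟨⟨-v, by linarith⟩, ⟨-v', by linarith⟩⟩, ⟨-u', ?_⟩⟩
    have h7 : (k : ℤ) = -(m * v') := by linarith
    have h8 : (m : ℤ) ^ 2 = m * (N * u' - k * v') := by rw [← h5]; ring
    rw [h8]
    linear_combination (k : ℤ) * h7
  · rintro ⟨⟨h1, h2⟩, ⟨w, h3⟩⟩
    obtain ⟨N', rfl⟩ := Int.natCast_dvd_natCast.1 h1
    obtain ⟨k', rfl⟩ := Int.natCast_dvd_natCast.1 h2
    constructor
    · rw [pow_mul, hgyx, ← pow_mul, show m * k' * N' = m * N' * k' by ring, pow_mul, hgx, one_pow]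
    · rw [pow_mul, hgyx, ← pow_mul, ← zpow_natCast, ← zpow_natCast, ← mul_inv_eq_one, ← zpow_neg,
        ← zpow_add]
      have h4 : (m : ℤ) + -((m * k' * k' : ℕ) : ℤ) = ((m * N' : ℕ) : ℤ) * (-w) := by
        have hm' : (m : ℤ) ≠ 0 := by positivity
        apply mul_left_cancel₀ hm'
        push_cast at h3 ⊢
        linear_combination -h3
      rw [h4, zpow_mul, zpow_natCast, hgx, one_zpow]

/-- **Lemma 4.1.** There exists an automorphism of `G` fixing `t` and interchanging
`tx` with `ty` iff `gcd(n,ℓ+m) = 2m` and `2mn ∣ ℓ² + 2mℓ - 3m²`. -/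
theorem statement7 (m n ℓ : ℕ) (hm : 0 < m) (hn : 4 ≤ n) (hne : Even n)
    (hl : ℓ ≤ n - 1) (hpar : ℓ % 2 = m % 2) :
    (∃ φ : MulAut (G m n ℓ),
        φ (gent m n ℓ) = gent m n ℓ ∧
        φ (gent m n ℓ * genx m n ℓ) = gent m n ℓ * geny m n ℓ ∧
        φ (gent m n ℓ * geny m n ℓ) = gent m n ℓ * genx m n ℓ) ↔
      (Int.gcd (n : ℤ) ((ℓ : ℤ) + m) = 2 * m ∧
        (2 * m * n : ℤ) ∣ ((ℓ : ℤ) ^ 2 + 2 * m * ℓ - 3 * m ^ 2)) := by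
  rw [exists_aut_iff, lattice_iff m n ℓ hm (by omega), arith1 _ _ _ hm (by omega)]
  obtain ⟨N, hN⟩ : ∃ N, n = 2 * N := ⟨n / 2, by obtain ⟨r, hr⟩ := hne; omega⟩
  obtain ⟨k, hk⟩ : ∃ k, ℓ + m = 2 * k := ⟨(ℓ + m) / 2, by omega⟩
  have e1 : n / 2 = N := by omega
  have e2 : (ℓ + m) / 2 = k := by omega
  rw [e1, e2]
  have e3 : (ℓ : ℤ) = 2 * k - m := by omega
  have e4 : Int.gcd (n : ℤ) ((ℓ : ℤ) + m) = 2 * Nat.gcd N k := by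
    rw [← Nat.gcd_mul_left, ← hN, ← hk]
    exact_mod_cast Int.gcd_natCast_natCast n (ℓ + m)
  have e5 : (ℓ : ℤ) ^ 2 + 2 * m * ℓ - 3 * m ^ 2 = 4 * ((k : ℤ) ^ 2 - m ^ 2) := by
    rw [e3]; ring
  have e6 : (2 * m * n : ℤ) = 4 * (m * N) := by rw [hN]; push_cast; ring
  rw [e4, e5, e6, mul_dvd_mul_iff_left (by norm_num : (4 : ℤ) ≠ 0)]
  exact and_congr_left fun _ => by omega

end HTGPaper
end

section
/- Let m and n be positive integers with n ≥ 4 even, let 0 ≤ ℓ ≤ n−1 be an integer of the same parity as m, and let G = ⟨t, x, y | t² = 1, x^{n/2} = 1, y^m = x^{(ℓ+m)/2}, txt = x⁻¹, tyt = y⁻¹, xy = yx⟩. Then there exists an automorphism of G fixing ty and interchanging t with tx if and only if ℓ ∈ {0, n/2}. -/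
namespace HTGPaper

section Aux
variable (m n ℓ : ℕ)

lemma relt : gent m n ℓ ^ 2 = 1 :=
  PresentedGroup.one_of_mem (rels := rels m n ℓ) (x := FreeGroup.of Gen.t ^ 2) (by simp [rels])

lemma relx : genx m n ℓ ^ (n / 2) = 1 :=
  PresentedGroup.one_of_mem (rels := rels m n ℓ) (x := FreeGroup.of Gen.x ^ (n / 2))
    (by simp [rels])

lemma rely : geny m n ℓ ^ m = genx m n ℓ ^ ((ℓ + m) / 2) :=
  mul_inv_eq_one.1 <| PresentedGroup.one_of_mem (rels := rels m n ℓ)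
    (x := FreeGroup.of Gen.y ^ m * (FreeGroup.of Gen.x ^ ((ℓ + m) / 2))⁻¹) (by simp [rels])

lemma reltx : gent m n ℓ * genx m n ℓ * (gent m n ℓ)⁻¹ * genx m n ℓ = 1 :=
  PresentedGroup.one_of_mem (rels := rels m n ℓ)
    (x := FreeGroup.of Gen.t * FreeGroup.of Gen.x * (FreeGroup.of Gen.t)⁻¹ * FreeGroup.of Gen.x)
    (by simp [rels])

lemma relty : gent m n ℓ * geny m n ℓ * (gent m n ℓ)⁻¹ * geny m n ℓ = 1 :=
  PresentedGroup.one_of_mem (rels := rels m n ℓ)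
    (x := FreeGroup.of Gen.t * FreeGroup.of Gen.y * (FreeGroup.of Gen.t)⁻¹ * FreeGroup.of Gen.y)
    (by simp [rels])

lemma relxy : Commute (genx m n ℓ) (geny m n ℓ) := by
  have h : genx m n ℓ * geny m n ℓ * (genx m n ℓ)⁻¹ * (geny m n ℓ)⁻¹ = 1 :=
    PresentedGroup.one_of_mem (rels := rels m n ℓ)
      (x := FreeGroup.of Gen.x * FreeGroup.of Gen.y * (FreeGroup.of Gen.x)⁻¹ *
        (FreeGroup.of Gen.y)⁻¹) (by simp [rels])
  rw [mul_inv_eq_one, mul_inv_eq_iff_eq_mul] at h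
  exact h

/-- Universal property of `G`. -/
lemma exists_hom {H : Type*} [Group H] (a b c : H) (h1 : a ^ 2 = 1) (h2 : b ^ (n / 2) = 1)
    (h3 : c ^ m = b ^ ((ℓ + m) / 2)) (h4 : a * b * a⁻¹ * b = 1) (h5 : a * c * a⁻¹ * c = 1)
    (h6 : Commute b c) :
    ∃ f : G m n ℓ →* H, f (gent m n ℓ) = a ∧ f (genx m n ℓ) = b ∧ f (geny m n ℓ) = c := by
  let g : Gen → H := fun s => match s with
    | Gen.t => a
    | Gen.x => b
    | Gen.y => c
  have hg : ∀ r ∈ rels m n ℓ, FreeGroup.lift g r = 1 := by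
    intro r hr
    simp only [rels, Set.mem_insert_iff, Set.mem_singleton_iff] at hr
    rcases hr with rfl | rfl | rfl | rfl | rfl | rfl <;> simp [g, h1, h2, h3, h4, h5]
    rw [h6.eq]; simp
  exact ⟨PresentedGroup.toGroup hg, PresentedGroup.toGroup.of hg, PresentedGroup.toGroup.of hg,
    PresentedGroup.toGroup.of hg⟩

lemma x_order (hm : 0 < m) (j : ℕ) (h : genx m n ℓ ^ j = 1) : n / 2 ∣ j := by
  obtain ⟨f, -, hx, -⟩ := exists_hom m n ℓ (H := DihedralGroup (n / 2 * m))
    (DihedralGroup.sr 0) (DihedralGroup.r (m : ZMod (n / 2 * m)))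
    (DihedralGroup.r (((ℓ + m) / 2 : ℕ) : ZMod (n / 2 * m)))
    (by simp [pow_two])
    (by
      rw [DihedralGroup.r_pow, DihedralGroup.one_def,
        mul_comm (m : ZMod (n / 2 * m))]
      congr 1
      exact_mod_cast ZMod.natCast_self (n / 2 * m))
    (by rw [DihedralGroup.r_pow, DihedralGroup.r_pow, mul_comm (m : ZMod (n / 2 * m))])
    (by simp)
    (by simp)
    (by simp [Commute, SemiconjBy, add_comm])
  have h' := congrArg f h
  rw [map_pow, hx, map_one, DihedralGroup.r_pow, DihedralGroup.one_def] at h'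
  have h2 : ((m : ZMod (n / 2 * m)) * (j : ZMod (n / 2 * m))) = 0 := by
    injection h'
  have h3 : ((j * m : ℕ) : ZMod (n / 2 * m)) = 0 := by
    push_cast; rw [mul_comm (j : ZMod (n / 2 * m))]; exact h2
  rw [ZMod.natCast_eq_zero_iff] at h3
  exact Nat.dvd_of_mul_dvd_mul_right hm h3

lemma hom_id (f : G m n ℓ →* G m n ℓ) (ht : f (gent m n ℓ) = gent m n ℓ)
    (hx : f (genx m n ℓ) = genx m n ℓ) (hy : f (geny m n ℓ) = geny m n ℓ) :
    f = MonoidHom.id _ := by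
  apply PresentedGroup.ext
  rintro (_ | _ | _)
  · exact ht
  · exact hx
  · exact hy

end Aux

/-- **Lemma 4.3.** There exists an automorphism of `G` fixing `ty` and interchanging
`t` with `tx` iff `ℓ ∈ {0, n/2}`. -/
theorem statement9 (m n ℓ : ℕ) (hm : 0 < m) (hn : 4 ≤ n) (hne : Even n)
    (hl : ℓ ≤ n - 1) (hpar : ℓ % 2 = m % 2) :
    (∃ φ : MulAut (G m n ℓ),
        φ (gent m n ℓ * geny m n ℓ) = gent m n ℓ * geny m n ℓ ∧
        φ (gent m n ℓ) = gent m n ℓ * genx m n ℓ ∧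
        φ (gent m n ℓ * genx m n ℓ) = gent m n ℓ) ↔
      (ℓ = 0 ∨ 2 * ℓ = n) := by
  have hk : 2 * ((ℓ + m) / 2) = ℓ + m := by omega
  have hcomm := relxy m n ℓ
  have hyk := rely m n ℓ
  have hxn := relx m n ℓ
  have htt := relt m n ℓ
  have htx := reltx m n ℓ
  have hty := relty m n ℓ
  have hord := x_order m n ℓ hm ℓ
  have key : ((genx m n ℓ)⁻¹ * geny m n ℓ) ^ m = (genx m n ℓ)⁻¹ ^ ((ℓ + m) / 2) ↔
      genx m n ℓ ^ ℓ = 1 := by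
    rw [hcomm.inv_left.mul_pow, hyk, inv_pow, inv_pow, eq_inv_iff_mul_eq_one, mul_assoc,
      ← pow_add, ← two_mul, hk, pow_add, (Commute.pow_pow_self _ ℓ m).eq, inv_mul_cancel_left]
  constructor
  · rintro ⟨φ, h1, h2, h3⟩
    have hx : φ (genx m n ℓ) = (genx m n ℓ)⁻¹ := by
      rw [map_mul, h2, mul_assoc] at h3
      have h4 := mul_left_cancel (h3.trans (mul_one _).symm)
      exact eq_inv_of_mul_eq_one_right h4
    have hy : φ (geny m n ℓ) = (genx m n ℓ)⁻¹ * geny m n ℓ := by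
      rw [map_mul, h2, mul_assoc] at h1
      exact eq_inv_mul_of_mul_eq (mul_left_cancel h1)
    have := congrArg φ hyk
    rw [map_pow, map_pow, hx, hy, key] at this
    obtain ⟨c, hc⟩ := hord this
    obtain ⟨d, hd⟩ := hne
    have hd2 : n / 2 = d := by omega
    rw [hd2] at hc
    have hc2 : c < 2 := by
      by_contra hcc
      have : d * 2 ≤ d * c := Nat.mul_le_mul_left d (by omega)
      omega
    interval_cases c <;> omega
  · intro hl2
    have hxl : genx m n ℓ ^ ℓ = 1 := by
      rcases hl2 with h | h
      · rw [h, pow_zero]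
      · have h' : n / 2 = ℓ := by omega
        rwa [h'] at hxn
    rw [← key] at hxl
    have ht' : (gent m n ℓ)⁻¹ = gent m n ℓ :=
      inv_eq_of_mul_eq_one_left (by rw [← pow_two, htt])
    have ex : gent m n ℓ * genx m n ℓ * gent m n ℓ = (genx m n ℓ)⁻¹ := by
      rw [ht'] at htx; exact eq_inv_of_mul_eq_one_left htx
    have ey : gent m n ℓ * geny m n ℓ * gent m n ℓ = (geny m n ℓ)⁻¹ := by
      rw [ht'] at hty; exact eq_inv_of_mul_eq_one_left hty
    have cx : gent m n ℓ * genx m n ℓ = (genx m n ℓ)⁻¹ * gent m n ℓ := by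
      rw [← ex, mul_assoc, ← pow_two, htt, mul_one]
    have cx' : gent m n ℓ * (genx m n ℓ)⁻¹ = genx m n ℓ * gent m n ℓ := by
      rw [mul_inv_eq_iff_eq_mul, mul_assoc, cx, mul_inv_cancel_left]
    have cy : gent m n ℓ * geny m n ℓ = (geny m n ℓ)⁻¹ * gent m n ℓ := by
      rw [← ey, mul_assoc, ← pow_two, htt, mul_one]
    have b1 : (gent m n ℓ * genx m n ℓ) ^ 2 = 1 := by
      rw [pow_two, ← mul_assoc, ex, inv_mul_cancel]
    have bi : (gent m n ℓ * genx m n ℓ)⁻¹ = gent m n ℓ * genx m n ℓ :=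
      inv_eq_of_mul_eq_one_left (by rw [← pow_two, b1])
    obtain ⟨f, ft, fx, fy⟩ := exists_hom m n ℓ (gent m n ℓ * genx m n ℓ) (genx m n ℓ)⁻¹
      ((genx m n ℓ)⁻¹ * geny m n ℓ) b1 (by rw [inv_pow, hxn, inv_one]) hxl
      (by
        rw [mul_inv_cancel_right, bi, ← mul_assoc, ← pow_two, htt, one_mul, mul_inv_cancel])
      (by
        rw [bi, mul_assoc (gent m n ℓ) (genx m n ℓ), mul_inv_cancel_left,
          ← mul_assoc, ← mul_assoc, ey, mul_inv_cancel_right, inv_mul_cancel])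
      (by exact (Commute.refl _).mul_right hcomm.inv_left)
    have hff : f.comp f = MonoidHom.id _ := by
      apply hom_id
      · simp [ft, fx]
      · simp [fx]
      · simp [fx, fy]
    refine ⟨MonoidHom.toMulEquiv f f hff hff, ?_, ?_, ?_⟩
    · change f _ = _
      rw [map_mul, ft, fy, mul_assoc, mul_inv_cancel_left]
    · exact ft
    · change f _ = _
      rw [map_mul, ft, fx, mul_inv_cancel_right]

end HTGPaper
end
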